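/- Under Assumption 1, let (Ỹ_γ^x) be the one-step Poisson randomized midpoint Euler–Maruyama scheme with step size γ ∈ (0, γ₁], γ₁ < 1, and let (X_t^x) be the Langevin diffusion started at x. Then there exists a constant C > 0 independent of t and γ such that for every t ∈ [0, γ]: (i) ‖X_t^x − x‖₂ ≤ C(1 + |x|) t^{1/2}; (ii) ‖Ỹ_γ^x − x‖₂ ≤ C(1 + |x|) γ^{1/2}; (iii) ‖X_γ^x − Ỹ_γ^x‖₂ ≤ C(1 + |x|) γ^{3/2}, where ‖Z‖₂ = (E|Z|²)^{1/2}. -/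

import Mathlib

open MeasureTheory ProbabilityTheory Filter
open scoped ENNReal NNReal RealInnerProductSpace Topology BigOperators

noncomputable section

/-- Euclidean space `ℝ^d`. -/
abbrev Euc (d : ℕ) : Type := EuclideanSpace ℝ (Fin d)

/-- Assumption 1: `U` is `C¹`, `m`-strongly convex and `L`-gradient Lipschitz
(expressed through the two-sided quadratic bound), with `∇U(0) = 0`. -/
def StrongAssumption {d : ℕ} (U : Euc d → ℝ) (m L : ℝ) : Prop :=
  ContDiff ℝ 1 U ∧ 0 < m ∧ m ≤ L ∧
  (∀ x y : Euc d,
    m / 2 * ‖x - y‖ ^ 2 ≤ U y - U x - ⟪gradient U x, y - x⟫ ∧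
    U y - U x - ⟪gradient U x, y - x⟫ ≤ L / 2 * ‖x - y‖ ^ 2) ∧
  gradient U 0 = 0

/-- Assumption 3: `U` is `C³` with third derivative uniformly bounded by `Lt`. -/
def ThirdDerivBounded {d : ℕ} (U : Euc d → ℝ) (Lt : ℝ) : Prop :=
  ContDiff ℝ 3 U ∧ ∀ x : Euc d, ‖iteratedFDeriv ℝ 3 U x‖ ≤ Lt

/-- The standard Gaussian measure on `ℝ^d`. -/
def stdGaussian (d : ℕ) : Measure (Euc d) :=
  (Measure.pi fun _ : Fin d => ProbabilityTheory.gaussianReal 0 1).map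
    ⇑(EuclideanSpace.equiv (Fin d) ℝ).symm

/-- Bernoulli(p) distribution on `ℝ`, giving mass `p` to `1` and `1-p` to `0`. -/
def bern (p : ℝ≥0∞) : Measure ℝ :=
  p • Measure.dirac (1 : ℝ) + (1 - p) • Measure.dirac (0 : ℝ)

/-- The `i`-th PRLMC midpoint. -/
def prlmcMid {d : ℕ} (U : Euc d → ℝ) (η : ℝ) (K : ℕ) (x : Euc d)
    (g : Fin K → Euc d) (i : Fin K) : Euc d :=
  x - (((i : ℝ) * η / (K : ℝ)) • gradient U x) + Real.sqrt (2 * (i : ℝ) * η / (K : ℝ)) • g i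

/-- One step of the PRLMC scheme with step size `η`, Bernoulli variables `h`,
midpoint Gaussians `g` and driving Gaussian `z`. -/
def prlmcStep {d : ℕ} (U : Euc d → ℝ) (η : ℝ) (K : ℕ) (x : Euc d)
    (h : Fin K → ℝ) (g : Fin K → Euc d) (z : Euc d) : Euc d :=
  x - η • gradient U x
    + η • ∑ i : Fin K, h i • (gradient U x - gradient U (prlmcMid U η K x g i))
    + Real.sqrt (2 * η) • z

/-- The law of the randomness used at a single step of the PRLMC scheme:
`K` i.i.d. Bernoulli(1/K) variables, `K` i.i.d. standard Gaussians for the midpoints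
and one standard Gaussian. -/
def prlmcNoise (d K : ℕ) : Measure ((Fin K → ℝ) × (Fin K → Euc d) × Euc d) :=
  (Measure.pi fun _ : Fin K => bern (K : ℝ≥0∞)⁻¹).prod
    ((Measure.pi fun _ : Fin K => stdGaussian d).prod (stdGaussian d))

/-- The one-step transition kernel `Q_η` of the PRLMC chain. -/
def prlmcKernel {d : ℕ} (U : Euc d → ℝ) (η : ℝ) (K : ℕ) (x : Euc d) : Measure (Euc d) :=
  (prlmcNoise d K).map fun r => prlmcStep U η K x r.1 r.2.1 r.2.2

/-- The law of the PRLMC chain after `n` steps, started from the distribution `μ`. -/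
def prlmcIter {d : ℕ} (U : Euc d → ℝ) (η : ℝ) (K : ℕ) (μ : Measure (Euc d)) :
    ℕ → Measure (Euc d)
  | 0 => μ
  | n + 1 => (prlmcIter U η K μ n).bind (prlmcKernel U η K)

/-- The law of the decreasing-step PRLMC chain after `n` steps (the `(k+1)`-th step uses
step size `γ (k+1)`), started from the distribution `μ`. -/
def prlmcIterVar {d : ℕ} (U : Euc d → ℝ) (K : ℕ) (γ : ℕ → ℝ) (μ : Measure (Euc d)) :
    ℕ → Measure (Euc d)
  | 0 => μ
  | n + 1 => (prlmcIterVar U K γ μ n).bind (prlmcKernel U (γ (n + 1)) K)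

/-- Total variation distance. -/
def dTV {d : ℕ} (μ ν : Measure (Euc d)) : ℝ≥0∞ :=
  ⨆ (A : Set (Euc d)) (_ : MeasurableSet A), max (μ A - ν A) (ν A - μ A)

/-- 2-Wasserstein distance. -/
def W2 {d : ℕ} (μ ν : Measure (Euc d)) : ℝ≥0∞ :=
  ⨅ (π : Measure (Euc d × Euc d)) (_ : π.map Prod.fst = μ ∧ π.map Prod.snd = ν),
    (∫⁻ p, ((‖p.1 - p.2‖₊ : ℝ≥0∞)) ^ 2 ∂π) ^ (1 / 2 : ℝ)

/-- The Gibbs measure `π(dx) ∝ exp(-U(x)) dx`. -/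
def gibbs {d : ℕ} (U : Euc d → ℝ) : Measure (Euc d) :=
  (∫⁻ x, ENNReal.ofReal (Real.exp (-U x)) ∂(volume : Measure (Euc d)))⁻¹ •
    (volume : Measure (Euc d)).withDensity fun x => ENNReal.ofReal (Real.exp (-U x))

/-- Membership in the functional class `𝒢`: `C²` functions with bounded gradient and
bounded Hessian. -/
def MemG {d : ℕ} (h : Euc d → ℝ) : Prop :=
  ContDiff ℝ 2 h ∧ (∃ M, ∀ x, ‖gradient h x‖ ≤ M) ∧
    (∃ M, ∀ x, ‖iteratedFDeriv ℝ 2 h x‖ ≤ M)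

/-- The distance `d_𝒢`. -/
def dG {d : ℕ} (μ ν : Measure (Euc d)) : ℝ :=
  sSup { r : ℝ | ∃ h : Euc d → ℝ, MemG h ∧ r = (∫ x, h x ∂μ) - ∫ x, h x ∂ν }

/-- `B` is a standard `d`-dimensional Brownian motion on `(Ω, P)`. -/
def IsBrownianMotion {Ω : Type} [MeasurableSpace Ω] {d : ℕ} (P : Measure Ω)
    (B : ℝ → Ω → Euc d) : Prop :=
  (∀ t, Measurable (B t)) ∧
  (∀ᵐ ω ∂P, B 0 ω = 0 ∧ Continuous fun t => B t ω) ∧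
  (∀ s t : ℝ, 0 ≤ s → s ≤ t →
    Measure.map (fun ω => B t ω - B s ω) P
      = Measure.map (fun z => Real.sqrt (t - s) • z) (stdGaussian d)) ∧
  (∀ τ : ℕ → ℝ, Monotone τ → 0 ≤ τ 0 →
    iIndepFun (fun (i : ℕ) ω => B (τ (i + 1)) ω - B (τ i) ω) P)

/-- `X` is a solution of the Langevin SDE `dX_t = -∇U(X_t) dt + √2 dB_t` started at `x`. -/
def SolvesLangevin {Ω : Type} [MeasurableSpace Ω] {d : ℕ} (U : Euc d → ℝ) (P : Measure Ω)
    (B X : ℝ → Ω → Euc d) (x : Euc d) : Prop :=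
  (∀ t, Measurable (X t)) ∧
  ∀ᵐ ω ∂P, (Continuous fun t => X t ω) ∧ ∀ t, 0 ≤ t →
    X t ω = x - (∫ s in (0:ℝ)..t, gradient U (X s ω)) + Real.sqrt 2 • B t ω

/-- `κ = 2mL/(m+L)`. -/
def kap (m L : ℝ) : ℝ := 2 * m * L / (m + L)

/-- Cumulative times `t_n = γ_1 + ⋯ + γ_n`. -/
def tseq (γ : ℕ → ℝ) (n : ℕ) : ℝ := ∑ k ∈ Finset.Icc 1 n, γ k

/-- The one-step Poisson randomized midpoint scheme `Ỹ_γ^x`, driven by the same Brownian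
motion `B` as the diffusion (so that `√(2γ) ξ = √2 B_γ`), with Bernoulli variables `H` and
midpoint Gaussians `ξ'`. -/
def oneStepPRLMC {Ω : Type} {d : ℕ} (U : Euc d → ℝ) (γ : ℝ) (K : ℕ) (x : Euc d)
    (B : ℝ → Ω → Euc d) (H : Fin K → Ω → ℝ) (ξ' : Fin K → Ω → Euc d) (ω : Ω) : Euc d :=
  x - γ • gradient U x
    + γ • ∑ i : Fin K, H i ω •
        (gradient U x - gradient U (prlmcMid U γ K x (fun j => ξ' j ω) i))
    + Real.sqrt 2 • B γ ω

/-!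
Compare both processes with the Euler step `x - t ∇U(x) + √2 B_t`. It leaves `x` by at most a
multiple of `(1 + |x|) √t`, because the drift has linear growth and Brownian motion has size `√t`.
The diffusion and the midpoint scheme differ from it only through increments of the Lipschitz drift
along such displacements, over a time of order `γ`: these contribute `γ · √γ = γ^{3/2}`. For the
diffusion the displacement is that of the path itself, and Grönwall's lemma reduces it to that of
the Euler steps. No cancellation between the terms is needed, so the triangle inequality in `L^p`
gives all three estimates.
-/

theorem lipschitzWith_of_quadratic_bounds {E : Type*} [NormedAddCommGroup E]
    [InnerProductSpace ℝ E] {f : E → ℝ} {g : E → E} {L : ℝ≥0} (hL : 0 < L)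
    (hlower : ∀ x y, f x + ⟪g x, y - x⟫ ≤ f y)
    (hupper : ∀ x y, f y ≤ f x + ⟪g x, y - x⟫ + L / 2 * ‖y - x‖ ^ 2) :
    LipschitzWith L g := by
  have hL' : (0 : ℝ) < L := hL
  -- Compare the affine minorant at `x` with the quadratic majorant at `y`, at the minimizer
  -- `y - L⁻¹ (g y - g x)` of their difference.
  have half_coercive (x y : E) :
      f x + ⟪g x, y - x⟫ + (2 * L : ℝ)⁻¹ * ‖g y - g x‖ ^ 2 ≤ f y := by
    set v := g y - g x with hv
    have h₁ := hlower x (y - (L : ℝ)⁻¹ • v)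
    have h₂ := hupper y (y - (L : ℝ)⁻¹ • v)
    have hinner : ⟪g y, (L : ℝ)⁻¹ • v⟫ - ⟪g x, (L : ℝ)⁻¹ • v⟫ = (L : ℝ)⁻¹ * ‖v‖ ^ 2 := by
      rw [← inner_sub_left, ← hv, real_inner_smul_right, real_inner_self_eq_norm_sq]
    have hquad : (L : ℝ) / 2 * ‖(L : ℝ)⁻¹ • v‖ ^ 2 = (2 * L : ℝ)⁻¹ * ‖v‖ ^ 2 := by
      rw [norm_smul, mul_pow, norm_inv, Real.norm_of_nonneg hL'.le]
      field_simp
    have hsplit : (L : ℝ)⁻¹ * ‖v‖ ^ 2 = 2 * ((2 * L : ℝ)⁻¹ * ‖v‖ ^ 2) := by field_simp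
    rw [sub_right_comm, inner_sub_right] at h₁
    rw [sub_sub_cancel_left, norm_neg, inner_neg_right, hquad] at h₂
    linarith
  refine LipschitzWith.of_dist_le_mul fun y x => ?_
  rw [dist_eq_norm, dist_eq_norm]
  have hcoercive : (L : ℝ)⁻¹ * ‖g y - g x‖ ^ 2 ≤ ‖g y - g x‖ * ‖y - x‖ := by
    have hxy := half_coercive x y
    have hyx := half_coercive y x
    rw [norm_sub_rev (g x), ← neg_sub y x, inner_neg_right] at hyx
    have hsplit : (L : ℝ)⁻¹ * ‖g y - g x‖ ^ 2 = 2 * ((2 * L : ℝ)⁻¹ * ‖g y - g x‖ ^ 2) := by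
      field_simp
    have hcs := real_inner_le_norm (g y - g x) (y - x)
    rw [inner_sub_left] at hcs
    linarith
  rw [inv_mul_le_iff₀ hL'] at hcoercive
  by_contra! hlt
  nlinarith [norm_nonneg (y - x), mul_nonneg hL'.le (norm_nonneg (y - x))]

theorem norm_le_mul_one_add_norm_of_lipschitzWith {E F : Type*} [SeminormedAddCommGroup E]
    [SeminormedAddCommGroup F] {f : E → F} {L : ℝ≥0} (hf : LipschitzWith L f) (x : E) :
    ‖f x‖ ≤ (L + ‖f 0‖) * (1 + ‖x‖) := by
  have hdist : ‖f x - f 0‖ ≤ L * ‖x‖ := by simpa using hf.norm_sub_le x 0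
  have htri : ‖f x‖ ≤ ‖f x - f 0‖ + ‖f 0‖ := norm_le_norm_sub_add (f x) (f 0)
  nlinarith [L.coe_nonneg, norm_nonneg x, norm_nonneg (f 0),
    mul_nonneg (norm_nonneg (f 0)) (norm_nonneg x)]

theorem integral_le_exp_mul_integral_of_le_add_mul_integral {f a : ℝ → ℝ} (hf : Continuous f)
    (ha : Continuous a) {L t : ℝ} (hL : 0 ≤ L) (ht : 0 ≤ t) (ha_nonneg : ∀ s ∈ Set.Icc 0 t, 0 ≤ a s)
    (h : ∀ s ∈ Set.Icc 0 t, f s ≤ a s + L * ∫ r in 0..s, f r) :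
    ∫ s in 0..t, f s ≤ Real.exp (L * t) * ∫ s in 0..t, a s := by
  let φ : ℝ → ℝ := fun s => Real.exp (-(L * s)) * (∫ r in 0..s, f r) - ∫ r in 0..s, a r
  have hderiv (s : ℝ) : HasDerivAt φ
      (Real.exp (-(L * s)) * -(L * 1) * (∫ r in 0..s, f r) + Real.exp (-(L * s)) * f s - a s) s :=
    ((((hasDerivAt_id s).const_mul L).neg.exp).mul
      (hf.integral_hasStrictDerivAt 0 s).hasDerivAt).sub
      (ha.integral_hasStrictDerivAt 0 s).hasDerivAt
  have hanti : AntitoneOn φ (Set.Icc 0 t) := by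
    refine antitoneOn_of_deriv_nonpos (convex_Icc 0 t)
      (fun s _ => (hderiv s).continuousAt.continuousWithinAt)
      (fun s _ => (hderiv s).differentiableAt.differentiableWithinAt) fun s hs => ?_
    have hs : s ∈ Set.Icc 0 t := interior_subset hs
    rw [(hderiv s).deriv]
    have hexp : Real.exp (-(L * s)) ≤ 1 :=
      Real.exp_le_one_iff.2 (neg_nonpos.2 (mul_nonneg hL hs.1))
    have hdecay : Real.exp (-(L * s)) * (f s - L * ∫ r in 0..s, f r) ≤ a s :=
      calc Real.exp (-(L * s)) * (f s - L * ∫ r in 0..s, f r)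
          ≤ Real.exp (-(L * s)) * a s := by gcongr; linarith [h s hs]
        _ ≤ a s := mul_le_of_le_one_left (ha_nonneg s hs) hexp
    linarith
  have hφ : φ t ≤ φ 0 := hanti ⟨le_rfl, ht⟩ ⟨ht, le_rfl⟩ ht
  simp only [φ, intervalIntegral.integral_same, mul_zero, sub_zero, sub_nonpos] at hφ
  rwa [Real.exp_neg, inv_mul_le_iff₀ (Real.exp_pos _)] at hφ

section EulerStep

variable {E : Type*} [NormedAddCommGroup E] [NormedSpace ℝ E]

/-- The Euler step of duration `t` from `x` for the drift `-F`, with noise increment `w`. -/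
def eulerStep (F : E → E) (t : ℝ) (x w : E) : E :=
  x - t • F x + w

/-- The randomized midpoint step of duration `γ` from `x` for the drift `-F`: the `i`-th midpoint
is an Euler step of duration `τ i` with noise increment `ζ i`, and it corrects the drift with
weight `h i`. -/
def randomizedMidpointStep {ι : Type*} [Fintype ι] (F : E → E) (γ : ℝ) (τ : ι → ℝ) (x : E)
    (h : ι → ℝ) (ζ : ι → E) (w : E) : E :=
  x - γ • F x + γ • ∑ i, h i • (F x - F (eulerStep F (τ i) x (ζ i))) + w

/-- The path `y` solves `y' = -F(y) + w'`, `y 0 = x + w 0`, on `[0, ∞)`, in integrated form. -/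
def IsForcedFlow (F : E → E) (x : E) (w y : ℝ → E) : Prop :=
  ∀ t, 0 ≤ t → y t = x - (∫ s in 0..t, F (y s)) + w t

variable {F : E → E} {L : ℝ≥0} {x : E}

theorem norm_eulerStep_sub_le {t : ℝ} (ht : 0 ≤ t) (w : E) :
    ‖eulerStep F t x w - x‖ ≤ t * ‖F x‖ + ‖w‖ :=
  calc ‖eulerStep F t x w - x‖ = ‖w - t • F x‖ := by
        congr 1
        unfold eulerStep
        abel
    _ ≤ ‖w‖ + ‖t • F x‖ := norm_sub_le _ _
    _ = t * ‖F x‖ + ‖w‖ := by rw [norm_smul, Real.norm_of_nonneg ht, add_comm]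

theorem norm_randomizedMidpointStep_sub_eulerStep_le {ι : Type*} [Fintype ι]
    (hF : LipschitzWith L F) {γ : ℝ} (hγ : 0 ≤ γ) {τ h : ι → ℝ} (hh : ∀ i, |h i| ≤ 1) (ζ : ι → E)
    (w : E) :
    ‖randomizedMidpointStep F γ τ x h ζ w - eulerStep F γ x w‖ ≤
      γ * L * ∑ i, ‖eulerStep F (τ i) x (ζ i) - x‖ := by
  have hdiff : randomizedMidpointStep F γ τ x h ζ w - eulerStep F γ x w =
      γ • ∑ i, h i • (F x - F (eulerStep F (τ i) x (ζ i))) := by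
    unfold randomizedMidpointStep eulerStep
    abel
  have hterm (i : ι) : ‖h i • (F x - F (eulerStep F (τ i) x (ζ i)))‖ ≤
      L * ‖eulerStep F (τ i) x (ζ i) - x‖ := by
    rw [norm_smul, Real.norm_eq_abs, norm_sub_rev]
    exact (mul_le_of_le_one_left (norm_nonneg _) (hh i)).trans (hF.norm_sub_le _ _)
  rw [hdiff, norm_smul, Real.norm_of_nonneg hγ, mul_assoc, Finset.mul_sum]
  gcongr
  exact norm_sum_le_of_le _ fun i _ => hterm i

namespace IsForcedFlow

variable [CompleteSpace E] {w y : ℝ → E}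

theorem norm_sub_eulerStep_le_integral (h : IsForcedFlow F x w y) (hF : LipschitzWith L F)
    (hy : Continuous y) {t : ℝ} (ht : 0 ≤ t) :
    ‖y t - eulerStep F t x (w t)‖ ≤ L * ∫ s in 0..t, ‖y s - x‖ := by
  have hFy : Continuous fun s => F (y s) := hF.continuous.comp hy
  have hdiff : y t - eulerStep F t x (w t) = -∫ s in 0..t, (F (y s) - F x) := by
    rw [intervalIntegral.integral_sub (hFy.intervalIntegrable _ _) intervalIntegrable_const,
      intervalIntegral.integral_const, sub_zero, h t ht, eulerStep]
    abel
  rw [hdiff, norm_neg, ← intervalIntegral.integral_const_mul]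
  exact intervalIntegral.norm_integral_le_of_norm_le ht
    (Eventually.of_forall fun s _ => hF.norm_sub_le _ _)
    (Continuous.intervalIntegrable (by fun_prop) _ _)

theorem norm_sub_eulerStep_le (h : IsForcedFlow F x w y) (hF : LipschitzWith L F)
    (hy : Continuous y) (hw : Continuous w) {t : ℝ} (ht : 0 ≤ t) :
    ‖y t - eulerStep F t x (w t)‖ ≤
      L * Real.exp (L * t) * ∫ s in 0..t, ‖eulerStep F s x (w s) - x‖ := by
  have hgronwall : ∫ s in 0..t, ‖y s - x‖ ≤
      Real.exp (L * t) * ∫ s in 0..t, ‖eulerStep F s x (w s) - x‖ := by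
    refine integral_le_exp_mul_integral_of_le_add_mul_integral (by fun_prop)
      (by unfold eulerStep; fun_prop) L.coe_nonneg ht (fun s _ => norm_nonneg _) fun s hs => ?_
    calc ‖y s - x‖ ≤ ‖y s - eulerStep F s x (w s)‖ + ‖eulerStep F s x (w s) - x‖ :=
          norm_sub_le_norm_sub_add_norm_sub _ _ _
      _ ≤ ‖eulerStep F s x (w s) - x‖ + L * ∫ r in 0..s, ‖y r - x‖ := by
          rw [add_comm]
          gcongr
          exact h.norm_sub_eulerStep_le_integral hF hy hs.1
  calc ‖y t - eulerStep F t x (w t)‖ ≤ L * ∫ s in 0..t, ‖y s - x‖ :=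
        h.norm_sub_eulerStep_le_integral hF hy ht
    _ ≤ _ := by rw [mul_assoc]; gcongr

end IsForcedFlow

end EulerStep

section Lp

variable {Ω : Type*} {mΩ : MeasurableSpace Ω} {P : Measure Ω}
variable {E : Type*} [NormedAddCommGroup E]

theorem rpow_lintegral_enorm_le {S : Type*} {mS : MeasurableSpace S} {μ : Measure S}
    {f : S → E} (hf : AEStronglyMeasurable f μ) {p : ℝ≥0} (hp : 1 ≤ p) :
    (∫⁻ s, ‖f s‖ₑ ∂μ) ^ (p : ℝ) ≤ μ Set.univ ^ (p - 1 : ℝ) * ∫⁻ s, ‖f s‖ₑ ^ (p : ℝ) ∂μ := by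
  have hp₀ : p ≠ 0 := (zero_lt_one.trans_le hp).ne'
  have hholder := eLpNorm_le_eLpNorm_mul_rpow_measure_univ
    (p := 1) (q := p) (by exact_mod_cast hp) hf
  rw [eLpNorm_one_eq_lintegral_enorm] at hholder
  calc (∫⁻ s, ‖f s‖ₑ ∂μ) ^ (p : ℝ)
      ≤ (eLpNorm f p μ *
          μ Set.univ ^ (1 / (1 : ℝ≥0∞).toReal - 1 / (p : ℝ≥0∞).toReal)) ^ (p : ℝ) := by gcongr
    _ = eLpNorm f p μ ^ (p : ℝ) * μ Set.univ ^ (p - 1 : ℝ) := by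
        rw [ENNReal.mul_rpow_of_nonneg _ _ p.coe_nonneg, ← ENNReal.rpow_mul]
        congr 2
        simp only [ENNReal.toReal_one, ENNReal.coe_toReal]
        field_simp
    _ = _ := by rw [eLpNorm_nnreal_pow_eq_lintegral hp₀, mul_comm]

theorem eLpNorm_integral_norm_le {S : Type*} {mS : MeasurableSpace S} {μ : Measure S}
    [SFinite μ] [SFinite P] {A : Ω → S → E}
    (hA : StronglyMeasurable (Function.uncurry A)) {p : ℝ≥0} (hp : 1 ≤ p) {β : ℝ≥0∞}
    (hβ : ∀ᵐ s ∂μ, eLpNorm (A · s) p P ≤ β) :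
    eLpNorm (fun ω => ∫ s, ‖A ω s‖ ∂μ) p P ≤ μ Set.univ * β := by
  have hp₀ : p ≠ 0 := (zero_lt_one.trans_le hp).ne'
  have hp_pos : (0 : ℝ) < p := by exact_mod_cast hp₀.bot_lt
  rw [← ENNReal.rpow_le_rpow_iff hp_pos, eLpNorm_nnreal_pow_eq_lintegral hp₀]
  calc ∫⁻ ω, ‖∫ s, ‖A ω s‖ ∂μ‖ₑ ^ (p : ℝ) ∂P
      ≤ ∫⁻ ω, (∫⁻ s, ‖A ω s‖ₑ ∂μ) ^ (p : ℝ) ∂P := by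
        gcongr with ω
        simpa only [enorm_norm] using enorm_integral_le_lintegral_enorm (μ := μ) (‖A ω ·‖)
    _ ≤ ∫⁻ ω, μ Set.univ ^ (p - 1 : ℝ) * ∫⁻ s, ‖A ω s‖ₑ ^ (p : ℝ) ∂μ ∂P := by
        gcongr with ω
        exact rpow_lintegral_enorm_le
          (hA.comp_measurable measurable_prodMk_left).aestronglyMeasurable hp
    _ = μ Set.univ ^ (p - 1 : ℝ) * ∫⁻ s, eLpNorm (A · s) p P ^ (p : ℝ) ∂μ := by
        have hmeas : Measurable fun q : Ω × S => ‖A q.1 q.2‖ₑ ^ (p : ℝ) := hA.enorm.pow_const _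
        rw [lintegral_const_mul _ hmeas.lintegral_prod_right', lintegral_lintegral_swap
          hmeas.aemeasurable]
        simp_rw [eLpNorm_nnreal_pow_eq_lintegral hp₀]
    _ ≤ μ Set.univ ^ (p - 1 : ℝ) * ∫⁻ _, β ^ (p : ℝ) ∂μ := by
        refine mul_le_mul_right (lintegral_mono_ae ?_) _
        filter_upwards [hβ] with s hs
        gcongr
    _ = (μ Set.univ * β) ^ (p : ℝ) := by
        rw [lintegral_const, ENNReal.mul_rpow_of_nonneg _ _ p.coe_nonneg, mul_left_comm, mul_comm]
        congr 1
        nth_rw 2 [← ENNReal.rpow_one (μ Set.univ)]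
        rw [← ENNReal.rpow_add_of_nonneg _ _ (by simpa using hp) zero_le_one, sub_add_cancel]

theorem exists_stronglyMeasurable_uncurry_modification {A : ℝ → Ω → E}
    (hA : ∀ s, StronglyMeasurable (A s)) (hcont : ∀ᵐ ω ∂P, Continuous fun s => A s ω) :
    ∃ A' : Ω → ℝ → E, StronglyMeasurable (Function.uncurry A') ∧ ∀ᵐ ω ∂P, ∀ s, A' ω s = A s ω := by
  obtain ⟨N, hN, hN_meas, hN_null⟩ := exists_measurable_superset_of_null (ae_iff.1 hcont)
  refine ⟨fun ω s => Nᶜ.indicator (A s) ω, ?_, ?_⟩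
  · refine (stronglyMeasurable_uncurry_of_continuous_of_stronglyMeasurable
      (u := fun s => Nᶜ.indicator (A s)) (fun ω => ?_)
      fun s => (hA s).indicator hN_meas.compl).comp_measurable measurable_swap
    by_cases hω : ω ∈ N
    · simpa [hω] using continuous_const
    · simpa [hω] using not_not.1 fun hdisc => hω (hN hdisc)
  · filter_upwards [measure_eq_zero_iff_ae_notMem.1 hN_null] with ω hω s
    simp [hω]

theorem eLpNorm_intervalIntegral_norm_le [SFinite P] {A : ℝ → Ω → E}
    (hA : ∀ s, StronglyMeasurable (A s)) (hcont : ∀ᵐ ω ∂P, Continuous fun s => A s ω)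
    {p : ℝ≥0} (hp : 1 ≤ p) {t : ℝ} (ht : 0 ≤ t) {β : ℝ≥0∞}
    (hβ : ∀ s ∈ Set.Icc 0 t, eLpNorm (A s) p P ≤ β) :
    eLpNorm (fun ω => ∫ s in 0..t, ‖A s ω‖) p P ≤ ENNReal.ofReal t * β := by
  obtain ⟨A', hA', hAA'⟩ := exists_stronglyMeasurable_uncurry_modification hA hcont
  calc eLpNorm (fun ω => ∫ s in 0..t, ‖A s ω‖) p P
      = eLpNorm (fun ω => ∫ s in Set.Ioc 0 t, ‖A' ω s‖) p P := by
        refine eLpNorm_congr_ae ?_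
        filter_upwards [hAA'] with ω hω
        simp only [hω, intervalIntegral.integral_of_le ht]
    _ ≤ volume.restrict (Set.Ioc 0 t) Set.univ * β := by
        refine eLpNorm_integral_norm_le hA' hp <|
          (ae_restrict_iff' measurableSet_Ioc).2 <| .of_forall fun s hs => ?_
        refine (eLpNorm_congr_ae ?_).trans_le (hβ s (Set.Ioc_subset_Icc_self hs))
        filter_upwards [hAA'] with ω hω using hω s
    _ = ENNReal.ofReal t * β := by
        rw [Measure.restrict_apply_univ, Real.volume_Ioc, sub_zero]

theorem eLpNorm_sub_le_ofReal_add {p : ℝ≥0∞} (hp : 1 ≤ p) {f g h : Ω → E}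
    (hf : AEStronglyMeasurable f P) (hg : AEStronglyMeasurable g P)
    (hh : AEStronglyMeasurable h P) {a b : ℝ} (ha : 0 ≤ a) (hb : 0 ≤ b)
    (hfg : eLpNorm (f - g) p P ≤ ENNReal.ofReal a) (hgh : eLpNorm (g - h) p P ≤ ENNReal.ofReal b) :
    eLpNorm (f - h) p P ≤ ENNReal.ofReal (a + b) := by
  rw [← sub_add_sub_cancel f g h, ENNReal.ofReal_add ha hb]
  exact (eLpNorm_add_le (hf.sub hg) (hg.sub hh) hp).trans (add_le_add hfg hgh)

theorem lintegral_nnnorm_sq_le_of_eLpNorm_le {f : Ω → E} {a b : ℝ} (ha : 0 ≤ a)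
    (hf : eLpNorm f (2 : ℝ≥0) P ≤ ENNReal.ofReal a) (hab : a ^ 2 = b) :
    ∫⁻ ω, (‖f ω‖₊ : ℝ≥0∞) ^ 2 ∂P ≤ ENNReal.ofReal b := by
  have hpow := eLpNorm_nnreal_pow_eq_lintegral (f := f) (μ := P) (two_ne_zero (α := ℝ≥0))
  simp only [NNReal.coe_ofNat, ENNReal.rpow_ofNat] at hpow
  calc ∫⁻ ω, (‖f ω‖₊ : ℝ≥0∞) ^ 2 ∂P = eLpNorm f (2 : ℝ≥0) P ^ 2 := hpow.symm
    _ ≤ ENNReal.ofReal a ^ 2 := by gcongr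
    _ = ENNReal.ofReal b := by rw [← ENNReal.ofReal_pow ha, hab]

end Lp

section LocalError

variable {Ω : Type*} {mΩ : MeasurableSpace Ω} {P : Measure Ω}
variable {E : Type*} [NormedAddCommGroup E] [NormedSpace ℝ E]
variable {ι : Type*} {F : E → E} {L σ T p : ℝ≥0} {x : E} {γ t : ℝ}
variable {W X : ℝ → Ω → E} {τ : ι → ℝ} {H : ι → Ω → ℝ} {ζ : ι → Ω → E}

/-- `W` is a driving noise, such as a Brownian motion, with almost surely continuous paths and value
of size at most `σ √t` in `L^p` at time `t`. -/
structure IsDiffusiveNoise (W : ℝ → Ω → E) (p σ : ℝ≥0) (P : Measure Ω) : Prop where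
  stronglyMeasurable : ∀ t, StronglyMeasurable (W t)
  ae_continuous : ∀ᵐ ω ∂P, Continuous fun t => W t ω
  eLpNorm_le : ∀ t, 0 ≤ t → eLpNorm (W t) p P ≤ ENNReal.ofReal (σ * √t)

/-- `X` is a continuous solution of `dX_t = -F(X_t) dt + dW_t` started at `x`. -/
structure IsLangevinSolution (F : E → E) (x : E) (W X : ℝ → Ω → E) (P : Measure Ω) : Prop where
  aestronglyMeasurable : ∀ t, AEStronglyMeasurable (X t) P
  ae_continuous : ∀ᵐ ω ∂P, Continuous fun t => X t ω
  ae_isForcedFlow : ∀ᵐ ω ∂P, IsForcedFlow F x (fun t => W t ω) (fun t => X t ω)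

/-- The random inputs of a randomized midpoint step of duration `γ`: midpoint times `τ i` in
`[0, γ]`, weights `H i` bounded by one, and midpoint noises `ζ i` of size at most `σ √(τ i)` in
`L^p`. -/
structure IsMidpointInput (γ : ℝ) (τ : ι → ℝ) (H : ι → Ω → ℝ) (ζ : ι → Ω → E) (p σ : ℝ≥0)
    (P : Measure Ω) : Prop where
  mem_Icc : ∀ i, τ i ∈ Set.Icc 0 γ
  aestronglyMeasurable_weight : ∀ i, AEStronglyMeasurable (H i) P
  ae_abs_weight_le_one : ∀ i, ∀ᵐ ω ∂P, |H i ω| ≤ 1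
  aestronglyMeasurable_noise : ∀ i, AEStronglyMeasurable (ζ i) P
  eLpNorm_noise_le : ∀ i, eLpNorm (ζ i) p P ≤ ENNReal.ofReal (σ * √(τ i))

theorem aestronglyMeasurable_eulerStep {w : Ω → E} (hw : AEStronglyMeasurable w P) :
    AEStronglyMeasurable (fun ω => eulerStep F t x (w ω)) P :=
  aestronglyMeasurable_const.add hw

theorem IsMidpointInput.aestronglyMeasurable_randomizedMidpointStep [Fintype ι]
    (hM : IsMidpointInput γ τ H ζ p σ P) (hF : Continuous F) {w : Ω → E}
    (hw : AEStronglyMeasurable w P) :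
    AEStronglyMeasurable
      (fun ω => randomizedMidpointStep F γ τ x (H · ω) (ζ · ω) (w ω)) P := by
  have hterm (i : ι) : AEStronglyMeasurable
      (fun ω => H i ω • (F x - F (eulerStep F (τ i) x (ζ i ω)))) P :=
    (hM.aestronglyMeasurable_weight i).smul <| aestronglyMeasurable_const.sub <|
      hF.comp_aestronglyMeasurable <|
        aestronglyMeasurable_eulerStep (hM.aestronglyMeasurable_noise i)
  exact (aestronglyMeasurable_const.add
    ((Finset.aestronglyMeasurable_fun_sum _ fun i _ => hterm i).const_smul γ)).add hw

theorem eLpNorm_eulerStep_sub_le [IsProbabilityMeasure P] (hp : 1 ≤ p) (ht : t ∈ Set.Icc 0 (T : ℝ))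
    {w : Ω → E} (hw : AEStronglyMeasurable w P)
    (hw_norm : eLpNorm w p P ≤ ENNReal.ofReal (σ * √t)) :
    eLpNorm (fun ω => eulerStep F t x (w ω) - x) p P ≤
      ENNReal.ofReal ((√T * ‖F x‖ + σ) * √t) := by
  have hp' : (1 : ℝ≥0∞) ≤ p := by exact_mod_cast hp
  have htF : 0 ≤ t * ‖F x‖ := mul_nonneg ht.1 (norm_nonneg _)
  have hsqrt : t ≤ √T * √t :=
    calc t = √t * √t := (Real.mul_self_sqrt ht.1).symm
      _ ≤ √T * √t := by gcongr; exact ht.2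
  calc eLpNorm (fun ω => eulerStep F t x (w ω) - x) p P
      ≤ eLpNorm ((fun _ => t * ‖F x‖) + fun ω => ‖w ω‖) p P :=
        eLpNorm_mono_real fun ω => norm_eulerStep_sub_le ht.1 _
    _ ≤ eLpNorm (fun _ : Ω => t * ‖F x‖) p P + eLpNorm (fun ω => ‖w ω‖) p P :=
        eLpNorm_add_le aestronglyMeasurable_const hw.norm hp'
    _ ≤ ENNReal.ofReal (t * ‖F x‖) + ENNReal.ofReal (σ * √t) := by
        rw [eLpNorm_norm, eLpNorm_const _ (one_pos.trans_le hp').ne' (NeZero.ne P), measure_univ,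
          ENNReal.one_rpow, mul_one, Real.enorm_of_nonneg htF]
        gcongr
    _ ≤ ENNReal.ofReal ((√T * ‖F x‖ + σ) * √t) := by
        rw [← ENNReal.ofReal_add htF (by positivity)]
        refine ENNReal.ofReal_le_ofReal ?_
        linarith [mul_le_mul_of_nonneg_right hsqrt (norm_nonneg (F x))]

theorem IsLangevinSolution.eLpNorm_sub_eulerStep_le [CompleteSpace E] [IsProbabilityMeasure P]
    (hX : IsLangevinSolution F x W X P) (hW : IsDiffusiveNoise W p σ P) (hF : LipschitzWith L F)
    (hp : 1 ≤ p) (ht : t ∈ Set.Icc 0 (T : ℝ)) :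
    eLpNorm (fun ω => X t ω - eulerStep F t x (W t ω)) p P ≤
      ENNReal.ofReal (L * Real.exp (L * T) * ((√T * ‖F x‖ + σ) * (t * √t))) := by
  have hdisp : ∀ s ∈ Set.Icc 0 t, eLpNorm (fun ω => eulerStep F s x (W s ω) - x) p P ≤
      ENNReal.ofReal ((√T * ‖F x‖ + σ) * √t) := fun s hs =>
    (eLpNorm_eulerStep_sub_le hp ⟨hs.1, hs.2.trans ht.2⟩
      (hW.stronglyMeasurable s).aestronglyMeasurable (hW.eLpNorm_le s hs.1)).trans <| by
      gcongr
      exact hs.2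
  calc eLpNorm (fun ω => X t ω - eulerStep F t x (W t ω)) p P
      ≤ ENNReal.ofReal (L * Real.exp (L * t)) *
          eLpNorm (fun ω => ∫ s in 0..t, ‖eulerStep F s x (W s ω) - x‖) p P := by
        refine eLpNorm_le_mul_eLpNorm_of_ae_le_mul ?_ _
        filter_upwards [hX.ae_isForcedFlow, hX.ae_continuous, hW.ae_continuous] with ω hflow hXω hWω
        rw [Real.norm_of_nonneg
          (intervalIntegral.integral_nonneg ht.1 fun _ _ => norm_nonneg _)]
        exact hflow.norm_sub_eulerStep_le hF hXω hWω ht.1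
    _ ≤ ENNReal.ofReal (L * Real.exp (L * T)) *
          (ENNReal.ofReal t * ENNReal.ofReal ((√T * ‖F x‖ + σ) * √t)) := by
        gcongr
        · exact ht.2
        · refine eLpNorm_intervalIntegral_norm_le (A := fun s ω => eulerStep F s x (W s ω) - x)
            (fun s => ?_) ?_ hp ht.1 hdisp
          · exact (stronglyMeasurable_const.add (hW.stronglyMeasurable s)).sub
              stronglyMeasurable_const
          · filter_upwards [hW.ae_continuous] with ω hω
            unfold eulerStep
            fun_prop
    _ = ENNReal.ofReal (L * Real.exp (L * T) * ((√T * ‖F x‖ + σ) * (t * √t))) := by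
        rw [← ENNReal.ofReal_mul ht.1, ← ENNReal.ofReal_mul (by positivity)]
        ring_nf

theorem IsMidpointInput.eLpNorm_randomizedMidpointStep_sub_eulerStep_le [Fintype ι]
    [IsProbabilityMeasure P] (hM : IsMidpointInput γ τ H ζ p σ P) (hF : LipschitzWith L F)
    (hp : 1 ≤ p) (hγ : γ ∈ Set.Icc 0 (T : ℝ)) (w : Ω → E) :
    eLpNorm (fun ω => randomizedMidpointStep F γ τ x (H · ω) (ζ · ω) (w ω) -
        eulerStep F γ x (w ω)) p P ≤
      ENNReal.ofReal (L * Fintype.card ι * ((√T * ‖F x‖ + σ) * (γ * √γ))) := by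
  have hdisp (i : ι) : eLpNorm (fun ω => ‖eulerStep F (τ i) x (ζ i ω) - x‖) p P ≤
      ENNReal.ofReal ((√T * ‖F x‖ + σ) * √γ) := by
    rw [eLpNorm_norm]
    refine (eLpNorm_eulerStep_sub_le hp ⟨(hM.mem_Icc i).1, (hM.mem_Icc i).2.trans hγ.2⟩
      (hM.aestronglyMeasurable_noise i) (hM.eLpNorm_noise_le i)).trans ?_
    gcongr
    exact (hM.mem_Icc i).2
  have hmeas (i : ι) : AEStronglyMeasurable (fun ω => ‖eulerStep F (τ i) x (ζ i ω) - x‖) P :=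
    ((aestronglyMeasurable_eulerStep (hM.aestronglyMeasurable_noise i)).sub
      aestronglyMeasurable_const).norm
  calc eLpNorm (fun ω => randomizedMidpointStep F γ τ x (H · ω) (ζ · ω) (w ω) -
          eulerStep F γ x (w ω)) p P
      ≤ ENNReal.ofReal (γ * L) *
          eLpNorm (∑ i, fun ω => ‖eulerStep F (τ i) x (ζ i ω) - x‖) p P := by
        refine eLpNorm_le_mul_eLpNorm_of_ae_le_mul ?_ _
        filter_upwards [ae_all_iff.2 hM.ae_abs_weight_le_one] with ω hω
        rw [Finset.sum_apply, Real.norm_of_nonneg (by positivity)]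
        exact norm_randomizedMidpointStep_sub_eulerStep_le hF hγ.1 hω _ _
    _ ≤ ENNReal.ofReal (γ * L) *
          ∑ _i : ι, ENNReal.ofReal ((√T * ‖F x‖ + σ) * √γ) := by
        gcongr
        refine (eLpNorm_sum_le (fun i _ => hmeas i) (by exact_mod_cast hp)).trans ?_
        exact Finset.sum_le_sum fun i _ => hdisp i
    _ = ENNReal.ofReal (L * Fintype.card ι * ((√T * ‖F x‖ + σ) * (γ * √γ))) := by
        have hγ₀ := hγ.1
        rw [Finset.sum_const, Finset.card_univ, nsmul_eq_mul, ← ENNReal.ofReal_natCast,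
          ← ENNReal.ofReal_mul (by positivity), ← ENNReal.ofReal_mul (by positivity)]
        ring_nf

theorem IsLangevinSolution.eLpNorm_sub_le [CompleteSpace E] [IsProbabilityMeasure P]
    (hX : IsLangevinSolution F x W X P) (hW : IsDiffusiveNoise W p σ P) (hF : LipschitzWith L F)
    (hp : 1 ≤ p) (ht : t ∈ Set.Icc 0 (T : ℝ)) :
    eLpNorm (fun ω => X t ω - x) p P ≤
      ENNReal.ofReal ((L * Real.exp (L * T) * T + 1) * ((√T * ‖F x‖ + σ) * √t)) := by
  have hWt := (hW.stronglyMeasurable t).aestronglyMeasurable (μ := P)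
  have ht₀ := ht.1
  refine (eLpNorm_sub_le_ofReal_add (by exact_mod_cast hp) (hX.aestronglyMeasurable t)
    (aestronglyMeasurable_eulerStep hWt) aestronglyMeasurable_const (by positivity) (by positivity)
    (hX.eLpNorm_sub_eulerStep_le hW hF hp ht)
    (eLpNorm_eulerStep_sub_le hp ht hWt (hW.eLpNorm_le t ht.1))).trans ?_
  rw [add_one_mul, mul_left_comm _ t, ← mul_assoc _ t]
  gcongr
  exact ht.2

theorem IsMidpointInput.eLpNorm_randomizedMidpointStep_sub_le [Fintype ι]
    [IsProbabilityMeasure P] (hM : IsMidpointInput γ τ H ζ p σ P) (hF : LipschitzWith L F)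
    (hp : 1 ≤ p) (hγ : γ ∈ Set.Icc 0 (T : ℝ)) {w : Ω → E} (hw : AEStronglyMeasurable w P)
    (hw_norm : eLpNorm w p P ≤ ENNReal.ofReal (σ * √γ)) :
    eLpNorm (fun ω => randomizedMidpointStep F γ τ x (H · ω) (ζ · ω) (w ω) - x) p P ≤
      ENNReal.ofReal ((L * Fintype.card ι * T + 1) * ((√T * ‖F x‖ + σ) * √γ)) := by
  have hγ₀ := hγ.1
  refine (eLpNorm_sub_le_ofReal_add (by exact_mod_cast hp)
    (hM.aestronglyMeasurable_randomizedMidpointStep hF.continuous hw)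
    (aestronglyMeasurable_eulerStep hw) aestronglyMeasurable_const (by positivity) (by positivity)
    (hM.eLpNorm_randomizedMidpointStep_sub_eulerStep_le hF hp hγ w)
    (eLpNorm_eulerStep_sub_le hp hγ hw hw_norm)).trans ?_
  rw [add_one_mul, mul_left_comm _ γ, ← mul_assoc _ γ]
  gcongr
  exact hγ.2

theorem IsLangevinSolution.eLpNorm_sub_randomizedMidpointStep_le [CompleteSpace E] [Fintype ι]
    [IsProbabilityMeasure P] (hX : IsLangevinSolution F x W X P) (hW : IsDiffusiveNoise W p σ P)
    (hM : IsMidpointInput γ τ H ζ p σ P) (hF : LipschitzWith L F) (hp : 1 ≤ p)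
    (hγ : γ ∈ Set.Icc 0 (T : ℝ)) :
    eLpNorm (fun ω => X γ ω - randomizedMidpointStep F γ τ x (H · ω) (ζ · ω) (W γ ω)) p P ≤
      ENNReal.ofReal ((L * Real.exp (L * T) + L * Fintype.card ι) *
        ((√T * ‖F x‖ + σ) * (γ * √γ))) := by
  have hWγ := (hW.stronglyMeasurable γ).aestronglyMeasurable (μ := P)
  have hγ₀ := hγ.1
  have hmid := hM.eLpNorm_randomizedMidpointStep_sub_eulerStep_le hF hp hγ (x := x) (W γ)
  rw [add_mul]
  exact eLpNorm_sub_le_ofReal_add (by exact_mod_cast hp) (hX.aestronglyMeasurable γ)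
    (aestronglyMeasurable_eulerStep hWγ)
    (hM.aestronglyMeasurable_randomizedMidpointStep hF.continuous hWγ)
    (by positivity) (by positivity) (hX.eLpNorm_sub_eulerStep_le hW hF hp hγ)
    ((eLpNorm_sub_comm _ _ _ _).trans_le hmid)

theorem exists_eLpNorm_local_error_le [CompleteSpace E] [Fintype ι] (hF : LipschitzWith L F)
    (hp : 1 ≤ p) (T σ : ℝ≥0) :
    ∃ C > (0 : ℝ), ∀ γ ∈ Set.Icc 0 (T : ℝ), ∀ (x : E) {Ω : Type*} {_ : MeasurableSpace Ω}
      {P : Measure Ω} [IsProbabilityMeasure P] {W X : ℝ → Ω → E} {τ : ι → ℝ} {H : ι → Ω → ℝ}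
      {ζ : ι → Ω → E}, IsDiffusiveNoise W p σ P → IsLangevinSolution F x W X P →
      IsMidpointInput γ τ H ζ p σ P → ∀ t ∈ Set.Icc 0 γ,
        eLpNorm (fun ω => X t ω - x) p P ≤ ENNReal.ofReal (C * (1 + ‖x‖) * √t) ∧
        eLpNorm (fun ω => randomizedMidpointStep F γ τ x (H · ω) (ζ · ω) (W γ ω) - x) p P ≤
          ENNReal.ofReal (C * (1 + ‖x‖) * √γ) ∧
        eLpNorm (fun ω => X γ ω - randomizedMidpointStep F γ τ x (H · ω) (ζ · ω) (W γ ω)) p P ≤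
          ENNReal.ofReal (C * (1 + ‖x‖) * (γ * √γ)) := by
  let a : ℝ := L * Real.exp (L * T)
  let b : ℝ := L * Fintype.card ι
  let D : ℝ := √T * (L + ‖F 0‖) + σ + 1
  have ha : 0 ≤ a := by positivity
  have hb : 0 ≤ b := by positivity
  refine ⟨(a + b + 1) * (T + 1) * D, by positivity,
    fun γ hγ x Ω _ P _ W X τ H ζ hW hX hM t ht => ?_⟩
  have hDx : √T * ‖F x‖ + σ ≤ D * (1 + ‖x‖) := by
    have hFx := mul_le_mul_of_nonneg_left
      (norm_le_mul_one_add_norm_of_lipschitzWith hF x) (Real.sqrt_nonneg T)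
    nlinarith [σ.coe_nonneg, norm_nonneg x]
  have hle {c r : ℝ} (hc : c ≤ (a + b + 1) * (T + 1)) (hr : 0 ≤ r) :
      ENNReal.ofReal (c * ((√T * ‖F x‖ + σ) * r)) ≤
        ENNReal.ofReal ((a + b + 1) * (T + 1) * D * (1 + ‖x‖) * r) := by
    rw [mul_assoc _ D, mul_assoc _ (D * _)]
    gcongr
  have hWγ := (hW.stronglyMeasurable γ).aestronglyMeasurable (μ := P)
  exact ⟨(hX.eLpNorm_sub_le hW hF hp ⟨ht.1, ht.2.trans hγ.2⟩).trans
      (hle (by nlinarith [T.coe_nonneg]) (Real.sqrt_nonneg t)),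
    (hM.eLpNorm_randomizedMidpointStep_sub_le hF hp hγ hWγ (hW.eLpNorm_le γ hγ.1)).trans
      (hle (by nlinarith [T.coe_nonneg]) (Real.sqrt_nonneg γ)),
    (hX.eLpNorm_sub_randomizedMidpointStep_le hW hM hF hp hγ).trans
      (hle (by nlinarith [T.coe_nonneg]) (mul_nonneg hγ.1 (Real.sqrt_nonneg γ)))⟩

end LocalError

section Laws

variable {Ω : Type*} {mΩ : MeasurableSpace Ω} {P : Measure Ω}

theorem hasLaw_of_map_eq_pi_prod_pi {ι κ S S' : Type*} [Fintype ι] [Fintype κ]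
    [MeasurableSpace S] [MeasurableSpace S'] {μ : ι → Measure S} {ν : κ → Measure S'}
    [∀ i, IsProbabilityMeasure (μ i)] [∀ j, IsProbabilityMeasure (ν j)]
    {Y : ι → Ω → S} {Z : κ → Ω → S'}
    (h : P.map (fun ω => ((fun i => Y i ω), fun j => Z j ω)) =
      (Measure.pi μ).prod (Measure.pi ν)) :
    (∀ i, HasLaw (Y i) (μ i) P) ∧ ∀ j, HasLaw (Z j) (ν j) P := by
  have hjoint : HasLaw (fun ω => ((fun i => Y i ω), fun j => Z j ω))
      ((Measure.pi μ).prod (Measure.pi ν)) P :=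
    ⟨.of_map_ne_zero (h ▸ IsProbabilityMeasure.ne_zero _), h⟩
  exact ⟨fun i => (measurePreserving_eval μ i).comp_hasLaw
      (measurePreserving_fst.comp_hasLaw hjoint),
    fun j => (measurePreserving_eval ν j).comp_hasLaw (measurePreserving_snd.comp_hasLaw hjoint)⟩

theorem isProbabilityMeasure_bern {q : ℝ≥0∞} (hq : q ≤ 1) : IsProbabilityMeasure (bern q) :=
  ⟨by simp [bern, add_tsub_cancel_of_le hq]⟩

theorem ae_abs_le_one_of_hasLaw_bern {h : Ω → ℝ} {q : ℝ≥0∞} (hh : HasLaw h (bern q) P) :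
    ∀ᵐ ω ∂P, |h ω| ≤ 1 := by
  have hbern : ∀ᵐ y ∂bern q, |y| ≤ 1 := by simp [ae_iff, bern]
  rw [← hh.map_eq] at hbern
  exact ae_of_ae_map hh.aemeasurable hbern

theorem stdGaussian_eq_stdGaussian (d : ℕ) :
    _root_.stdGaussian d = ProbabilityTheory.stdGaussian (Euc d) :=
  map_pi_eq_stdGaussian

instance isProbabilityMeasure_stdGaussian (d : ℕ) :
    IsProbabilityMeasure (_root_.stdGaussian d) := by
  rw [stdGaussian_eq_stdGaussian]
  infer_instance

/-- The `L^p` norm of a standard Gaussian vector in `ℝ^d`, which sets the size of the Langevin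
noise; it is finite, hence the target `ℝ≥0`. -/
def gaussianSize (d : ℕ) (p : ℝ≥0) : ℝ≥0 :=
  (eLpNorm id p (_root_.stdGaussian d)).toNNReal

theorem eLpNorm_id_stdGaussian (d : ℕ) (p : ℝ≥0) :
    eLpNorm id p (_root_.stdGaussian d) = gaussianSize d p := by
  refine (ENNReal.coe_toNNReal ?_).symm
  rw [stdGaussian_eq_stdGaussian]
  exact (IsGaussian.memLp_id _ p ENNReal.coe_ne_top).eLpNorm_ne_top

theorem eLpNorm_smul_of_hasLaw_stdGaussian {d : ℕ} {ξ : Ω → Euc d}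
    (hξ : HasLaw ξ (_root_.stdGaussian d) P) (c : ℝ) (p : ℝ≥0) :
    eLpNorm (fun ω => c • ξ ω) p P = ‖c‖ₑ * gaussianSize d p := by
  rw [← eLpNorm_id_stdGaussian, ← hξ.map_eq,
    eLpNorm_map_measure aestronglyMeasurable_id hξ.aemeasurable, Function.id_comp]
  exact eLpNorm_const_smul c ξ p P

theorem eLpNorm_of_hasLaw_map_smul_stdGaussian {d : ℕ} {Z : Ω → Euc d} {c : ℝ}
    (hZ : HasLaw Z ((_root_.stdGaussian d).map (c • ·)) P) (p : ℝ≥0) :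
    eLpNorm Z p P = ‖c‖ₑ * gaussianSize d p := by
  rw [← Function.id_comp Z, ← eLpNorm_map_measure aestronglyMeasurable_id hZ.aemeasurable,
    hZ.map_eq, eLpNorm_map_measure aestronglyMeasurable_id (by fun_prop), Function.id_comp]
  exact eLpNorm_smul_of_hasLaw_stdGaussian .id c p

theorem enorm_sqrt_two_mul_mul_coe (t : ℝ) (c : ℝ≥0) :
    ‖√(2 * t)‖ₑ * c = ENNReal.ofReal ((NNReal.sqrt 2 * c : ℝ≥0) * √t) := by
  rw [Real.enorm_of_nonneg (Real.sqrt_nonneg _), ← ENNReal.ofReal_coe_nnreal,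
    ← ENNReal.ofReal_mul (Real.sqrt_nonneg _), Real.sqrt_mul zero_le_two]
  push_cast
  ring_nf

end Laws

theorem StrongAssumption.lipschitzWith_gradient {d : ℕ} {U : Euc d → ℝ} {m L : ℝ}
    (hU : StrongAssumption U m L) : LipschitzWith L.toNNReal (gradient U) := by
  obtain ⟨-, hm, hmL, hquad, -⟩ := hU
  have hL : 0 < L := hm.trans_le hmL
  refine lipschitzWith_of_quadratic_bounds (f := U) (Real.toNNReal_pos.2 hL)
    (fun x y => ?_) fun x y => ?_
  · linarith [(hquad x y).1, mul_nonneg (half_pos hm).le (sq_nonneg ‖x - y‖)]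
  · rw [Real.coe_toNNReal L hL.le, norm_sub_rev]
    linarith [(hquad x y).2]

theorem oneStepPRLMC_eq_randomizedMidpointStep {Ω : Type} {d K : ℕ} (U : Euc d → ℝ)
    (γ : ℝ) (x : Euc d) (B : ℝ → Ω → Euc d) (H : Fin K → Ω → ℝ)
    (ξ' : Fin K → Ω → Euc d) (ω : Ω) :
    oneStepPRLMC U γ K x B H ξ' ω =
      randomizedMidpointStep (gradient U) γ (fun i : Fin K => i * γ / K) x (H · ω)
        (fun i => √(2 * i * γ / K) • ξ' i ω) (√2 • B γ ω) :=
  rfl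

section Langevin

variable {Ω : Type} [MeasurableSpace Ω] {P : Measure Ω} {d : ℕ} {B X : ℝ → Ω → Euc d}

theorem IsBrownianMotion.hasLaw (hB : IsBrownianMotion P B) {t : ℝ} (ht : 0 ≤ t) :
    HasLaw (B t) ((_root_.stdGaussian d).map (√t • ·)) P := by
  obtain ⟨hmeas, hpath, hincr, -⟩ := hB
  have hlaw : HasLaw (fun ω => B t ω - B 0 ω) ((_root_.stdGaussian d).map (√t • ·)) P :=
    ⟨((hmeas t).sub (hmeas 0)).aemeasurable, by simpa only [sub_zero] using hincr 0 t le_rfl ht⟩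
  refine hlaw.congr ?_
  filter_upwards [hpath] with ω hω
  rw [hω.1, sub_zero]

theorem IsBrownianMotion.isDiffusiveNoise (hB : IsBrownianMotion P B) (p : ℝ≥0) :
    IsDiffusiveNoise (fun t ω => √2 • B t ω) p (NNReal.sqrt 2 * gaussianSize d p) P where
  stronglyMeasurable t := ((hB.1 t).const_smul √2).stronglyMeasurable
  ae_continuous := hB.2.1.mono fun _ h => h.2.const_smul √2
  eLpNorm_le t ht := by
    refine (eLpNorm_const_smul √2 (B t) p P).trans_le ?_
    rw [eLpNorm_of_hasLaw_map_smul_stdGaussian (hB.hasLaw ht), ← enorm_sqrt_two_mul_mul_coe,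
      Real.sqrt_mul zero_le_two, enorm_mul, mul_assoc]

theorem SolvesLangevin.isLangevinSolution {U : Euc d → ℝ} {x : Euc d}
    (hX : SolvesLangevin U P B X x) :
    IsLangevinSolution (gradient U) x (fun t ω => √2 • B t ω) X P where
  aestronglyMeasurable t := (hX.1 t).aestronglyMeasurable
  ae_continuous := hX.2.mono fun _ h => h.1
  ae_isForcedFlow := hX.2.mono fun _ h => h.2

theorem isMidpointInput_of_hasLaw {K : ℕ} {H : Fin K → Ω → ℝ} {ξ' : Fin K → Ω → Euc d} {q : ℝ≥0∞}
    (hH : ∀ i, HasLaw (H i) (bern q) P) (hξ : ∀ i, HasLaw (ξ' i) (_root_.stdGaussian d) P)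
    {γ : ℝ} (hγ : 0 ≤ γ) (p : ℝ≥0) :
    IsMidpointInput γ (fun i : Fin K => i * γ / K) H (fun i ω => √(2 * i * γ / K) • ξ' i ω) p
      (NNReal.sqrt 2 * gaussianSize d p) P where
  mem_Icc i := by
    have hi : (i : ℝ) ≤ K := by exact_mod_cast i.isLt.le
    exact ⟨by positivity, div_le_of_le_mul₀ (by positivity) hγ (by nlinarith)⟩
  aestronglyMeasurable_weight i := (hH i).aemeasurable.aestronglyMeasurable
  ae_abs_weight_le_one i := ae_abs_le_one_of_hasLaw_bern (hH i)
  aestronglyMeasurable_noise i :=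
    ((hξ i).aemeasurable.const_smul (√(2 * i * γ / K))).aestronglyMeasurable
  eLpNorm_noise_le i := by
    rw [← enorm_sqrt_two_mul_mul_coe, eLpNorm_smul_of_hasLaw_stdGaussian (hξ i), ← mul_div_assoc,
      ← mul_assoc]

end Langevin

theorem stmt13_general {d : ℕ} (K : ℕ) {U : Euc d → ℝ} {g : Euc d → Euc d} {L : ℝ≥0} (T : ℝ≥0)
    (hg : ∀ x, HasGradientAt U (g x) x) (hg_lip : LipschitzWith L g) :
    ∃ C > (0 : ℝ), ∀ γ : ℝ, 0 ≤ γ → γ ≤ T →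
      ∀ (x : Euc d) (Ω : Type) (_ : MeasurableSpace Ω) (P : Measure Ω),
        IsProbabilityMeasure P →
        ∀ (B X : ℝ → Ω → Euc d) (H : Fin K → Ω → ℝ) (ξ' : Fin K → Ω → Euc d) (q : ℝ≥0∞),
          IsBrownianMotion P B → SolvesLangevin U P B X x →
          (∀ i, HasLaw (H i) (bern q) P) → (∀ i, HasLaw (ξ' i) (_root_.stdGaussian d) P) →
          ∀ t : ℝ, t ∈ Set.Icc 0 γ →
            (∫⁻ ω, (‖X t ω - x‖₊ : ℝ≥0∞) ^ 2 ∂P ≤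
                ENNReal.ofReal (C * (1 + ‖x‖) ^ 2 * t)) ∧
            (∫⁻ ω, (‖oneStepPRLMC U γ K x B H ξ' ω - x‖₊ : ℝ≥0∞) ^ 2 ∂P ≤
                ENNReal.ofReal (C * (1 + ‖x‖) ^ 2 * γ)) ∧
            (∫⁻ ω, (‖X γ ω - oneStepPRLMC U γ K x B H ξ' ω‖₊ : ℝ≥0∞) ^ 2 ∂P ≤
                ENNReal.ofReal (C * (1 + ‖x‖) ^ 2 * γ ^ 3)) := by
  obtain rfl : gradient U = g := funext fun x => (hg x).gradient
  obtain ⟨C, hC, hbound⟩ := exists_eLpNorm_local_error_le (ι := Fin K) hg_lip one_le_two T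
    (NNReal.sqrt 2 * gaussianSize d 2)
  refine ⟨C ^ 2, pow_pos hC 2, fun γ hγ hγT x Ω _ P _ B X H ξ' q hB hX hH hξ t ht => ?_⟩
  obtain ⟨hdiffusion, hmidpoint, herror⟩ := hbound γ ⟨hγ, hγT⟩ x (hB.isDiffusiveNoise 2)
    hX.isLangevinSolution (isMidpointInput_of_hasLaw hH hξ hγ 2) t ht
  simp only [oneStepPRLMC_eq_randomizedMidpointStep]
  refine ⟨lintegral_nnnorm_sq_le_of_eLpNorm_le (by positivity) hdiffusion ?_,
    lintegral_nnnorm_sq_le_of_eLpNorm_le (by positivity) hmidpoint ?_,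
    lintegral_nnnorm_sq_le_of_eLpNorm_le (by positivity) herror ?_⟩
  · rw [mul_pow, mul_pow, Real.sq_sqrt ht.1]
  · rw [mul_pow, mul_pow, Real.sq_sqrt hγ]
  · rw [mul_pow, mul_pow, mul_pow, Real.sq_sqrt hγ, ← pow_succ]

/-- Under Assumption 1, there is `C > 0` (independent of `t`, `γ`) such
that the Langevin diffusion and the one-step Poisson randomized midpoint scheme satisfy, for
`t ∈ [0, γ]`:  `‖X_t^x − x‖₂ ≤ C(1+|x|) t^{1/2}`, `‖Ỹ_γ^x − x‖₂ ≤ C(1+|x|) γ^{1/2}` and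
`‖X_γ^x − Ỹ_γ^x‖₂ ≤ C(1+|x|) γ^{3/2}` (stated equivalently for the squared `L²`-norms). -/
theorem stmt13 (d K : ℕ) (hK : 1 ≤ K) (m L : ℝ) (γ₁ : ℝ) (hγ₁ : γ₁ ∈ Set.Ioo (0 : ℝ) 1)
    (U : Euc d → ℝ) (hU : StrongAssumption U m L) :
    ∃ C > (0 : ℝ), ∀ γ : ℝ, 0 < γ → γ ≤ γ₁ →
      ∀ (x : Euc d) (Ω : Type) (_ : MeasurableSpace Ω) (P : Measure Ω),
        IsProbabilityMeasure P →
        ∀ (B X : ℝ → Ω → Euc d) (H : Fin K → Ω → ℝ) (ξ' : Fin K → Ω → Euc d),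
          IsBrownianMotion P B → SolvesLangevin U P B X x →
          Measure.map (fun ω => ((fun i => H i ω), fun i => ξ' i ω)) P =
            (Measure.pi fun _ : Fin K => bern (K : ℝ≥0∞)⁻¹).prod
              (Measure.pi fun _ : Fin K => stdGaussian d) →
          IndepFun (fun ω => ((fun i => H i ω), fun i => ξ' i ω))
            (fun ω => fun s : ℝ => B s ω) P →
          ∀ t : ℝ, t ∈ Set.Icc 0 γ →
            (∫⁻ ω, (‖X t ω - x‖₊ : ℝ≥0∞) ^ 2 ∂P ≤
                ENNReal.ofReal (C * (1 + ‖x‖) ^ 2 * t)) ∧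
            (∫⁻ ω, (‖oneStepPRLMC U γ K x B H ξ' ω - x‖₊ : ℝ≥0∞) ^ 2 ∂P ≤
                ENNReal.ofReal (C * (1 + ‖x‖) ^ 2 * γ)) ∧
            (∫⁻ ω, (‖X γ ω - oneStepPRLMC U γ K x B H ξ' ω‖₊ : ℝ≥0∞) ^ 2 ∂P ≤
                ENNReal.ofReal (C * (1 + ‖x‖) ^ 2 * γ ^ 3)) := by
  have := isProbabilityMeasure_bern (ENNReal.inv_le_one.2 (Nat.one_le_cast.2 hK))
  obtain ⟨C, hC, hbound⟩ := stmt13_general K ⟨γ₁, hγ₁.1.le⟩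
    (fun x => (hU.1.differentiable one_ne_zero x).hasGradientAt) hU.lipschitzWith_gradient
  exact ⟨C, hC, fun γ hγ hγγ₁ x Ω _ P _ B X H ξ' hB hX hlaw _ =>
    hbound γ hγ.le hγγ₁ x Ω _ P ‹_› B X H ξ' _ hB hX (hasLaw_of_map_eq_pi_prod_pi hlaw).1
      (hasLaw_of_map_eq_pi_prod_pi hlaw).2⟩

end
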